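/- Let ℬ ⊆ ℕ be a primitive set, H the closure of the image of the diagonal embedding Δ : ℤ → ∏_{b∈ℬ} ℤ/bℤ with normalized Haar measure m_H, and W_∞ := ⋃_{N∈ℕ} W_{ℬ̃^(N)} where W_{ℬ̃^(N)} := {h ∈ H : h_b ≠ 0 for all b ∈ ℬ with no prime factor ≤ N}. Then lim_{N→∞} δ(M_{ℬ̃^(N)}) = 1 − m_H(W_∞). -/

import Mathlib

open Filter Set Topology MeasureTheory

open scoped Classical

noncomputable section

/-- The diagonal embedding `Δ : ℤ → ∏_{b ∈ B} ℤ/bℤ`. -/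
def diagEmb (B : Set ℕ) : ℤ →+ ((b : B) → ZMod b) where
  toFun n := fun b => (n : ZMod b)
  map_zero' := by ext b; simp
  map_add' m n := by ext b; simp [Int.cast_add]

/-- `H`, the topological closure of `Δ(ℤ)`, as a (closed) subgroup of `∏_{b ∈ B} ℤ/bℤ`. -/
def Hgrp (B : Set ℕ) : AddSubgroup ((b : B) → ZMod b) :=
  (diagEmb B).range.topologicalClosure

instance (B : Set ℕ) [∀ b : B, NeZero (b : ℕ)] : CompactSpace (Hgrp B) :=
  isCompact_iff_compactSpace.mp ((AddSubgroup.isClosed_topologicalClosure _).isCompact)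

instance (B : Set ℕ) : MeasurableSpace (Hgrp B) := borel _

instance (B : Set ℕ) : BorelSpace (Hgrp B) := ⟨rfl⟩

/-- The normalized Haar measure `m_H` on the compact abelian group `H`. -/
def mH (B : Set ℕ) [∀ b : B, NeZero (b : ℕ)] : Measure (Hgrp B) :=
  Measure.addHaarMeasure ⊤

/-- The window `W_{B'} ⊆ H` determined by a subset `B' ⊆ B`. -/
def Wset (B : Set ℕ) (B' : Set ℕ) : Set (Hgrp B) :=
  {h | ∀ b : B, (b : ℕ) ∈ B' → (h : (b : B) → ZMod b) b ≠ 0}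

/-- The set of multiples `M_B ⊆ ℤ` of a set `B ⊆ ℕ`. -/
def multiplesZ (B : Set ℕ) : Set ℤ := {n : ℤ | ∃ b ∈ B, (b : ℤ) ∣ n}

/-- The `B`-free integers `F_B = ℤ ∖ M_B`. -/
def freeZ (B : Set ℕ) : Set ℤ := (multiplesZ B)ᶜ

/-- The logarithmically weighted averages `(1/log n) ∑_{k=1}^n 1_A(k)/k`. -/
def logWeight (A : Set ℤ) (n : ℕ) : ℝ :=
  (Real.log n)⁻¹ * ∑ k ∈ Finset.Icc 1 n, A.indicator (fun m : ℤ => ((m : ℝ))⁻¹) (k : ℤ)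

/-- The lower logarithmic density of a set `A ⊆ ℤ`. -/
def logDensLow (A : Set ℤ) : ℝ := liminf (logWeight A) atTop

/-- `A ⊆ ℤ` has logarithmic density `d`. -/
def HasLogDensity (A : Set ℤ) (d : ℝ) : Prop := Tendsto (logWeight A) atTop (𝓝 d)

/-- `B` is primitive: no element divides another one. -/
def Primitive (B : Set ℕ) : Prop := ∀ b ∈ B, ∀ b' ∈ B, b ∣ b' → b = b'

/-- `B` is Behrend: its set of multiples has logarithmic density one. -/
def IsBehrend (B : Set ℕ) : Prop := logDensLow (multiplesZ B) = 1

/-- `B` is taut: removing any element strictly decreases the logarithmic density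
of the set of multiples. -/
def IsTaut (B : Set ℕ) : Prop :=
  ∀ b ∈ B, logDensLow (multiplesZ (B \ {b})) < logDensLow (multiplesZ B)

/-- `B̃^(N)`: the elements of `B` having no prime factor `≤ N`. -/
def Btilde (B : Set ℕ) (N : ℕ) : Set ℕ := {b ∈ B | ∀ p : ℕ, p.Prime → p ∣ b → N < p}

/-- `B^(N)`: the elements of `B` all of whose prime factors are `≤ N`. -/
def Bsmooth (B : Set ℕ) (N : ℕ) : Set ℕ := {b ∈ B | ∀ p : ℕ, p.Prime → p ∣ b → p ≤ N}


/-- Abel summation lower bound. -/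
lemma abel_bound (e φ : ℕ → ℝ) (C : ℝ) (hC : ∀ n, -C ≤ ∑ i ∈ Finset.range n, e i)
    (hφ : ∀ n, 0 ≤ φ n) (hanti : ∀ n, φ (n + 1) ≤ φ n) (n : ℕ) :
    -C * φ 0 ≤ ∑ i ∈ Finset.range n, e i * φ i := by
  have key : ∀ n, ((∑ i ∈ Finset.range n, e i) + C) * φ n - C * φ 0
      ≤ ∑ i ∈ Finset.range n, e i * φ i := by
    intro n
    induction n with
    | zero => simp
    | succ k ih =>
      have h1 := hC (k + 1)
      rw [Finset.sum_range_succ] at h1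
      rw [Finset.sum_range_succ, Finset.sum_range_succ]
      have h2 : ((∑ i ∈ Finset.range k, e i) + e k + C) * φ (k + 1)
          ≤ ((∑ i ∈ Finset.range k, e i) + e k + C) * φ k :=
        mul_le_mul_of_nonneg_left (hanti k) (by linarith)
      linarith
  have h1 := key n
  have h2 : 0 ≤ ((∑ i ∈ Finset.range n, e i) + C) * φ n :=
    mul_nonneg (by linarith [hC n]) (hφ n)
  linarith

lemma periodic_shift (e : ℕ → ℝ) (L : ℕ) (hper : ∀ n, e (n + L) = e n) (n : ℕ) :
    ∑ i ∈ Finset.range (n + L), e i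
      = ∑ i ∈ Finset.range n, e i + ∑ i ∈ Finset.range L, e i := by
  induction n with
  | zero => simp
  | succ k ih =>
    rw [show k + 1 + L = (k + L) + 1 by ring, Finset.sum_range_succ, ih,
      Finset.sum_range_succ, hper]
    ring

lemma periodic_bounded (e : ℕ → ℝ) (L : ℕ) (hL : 0 < L) (hper : ∀ n, e (n + L) = e n)
    (h0 : ∑ i ∈ Finset.range L, e i = 0) :
    ∃ C : ℝ, 0 ≤ C ∧ ∀ n, |∑ i ∈ Finset.range n, e i| ≤ C := by
  have hE : Function.Periodic (fun n => ∑ i ∈ Finset.range n, e i) L := by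
    intro n
    change ∑ i ∈ Finset.range (n + L), e i = _
    rw [periodic_shift e L hper, h0, add_zero]
  refine ⟨∑ j ∈ Finset.range L, |∑ i ∈ Finset.range j, e i|,
    Finset.sum_nonneg (fun _ _ => abs_nonneg _), fun n => ?_⟩
  have := hE.map_mod_nat n
  rw [← this]
  exact Finset.single_le_sum (f := fun j => |∑ i ∈ Finset.range j, e i|)
    (fun _ _ => abs_nonneg _) (Finset.mem_range.2 (Nat.mod_lt _ hL))

/-- indicator of `i + 1 ∈ M`. -/
def indS (M : Set ℤ) (i : ℕ) : ℝ := if ((i + 1 : ℕ) : ℤ) ∈ M then 1 else 0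

lemma indS_nonneg (M : Set ℤ) (i : ℕ) : 0 ≤ indS M i := by
  unfold indS; split_ifs <;> norm_num

lemma indS_le_one (M : Set ℤ) (i : ℕ) : indS M i ≤ 1 := by
  unfold indS; split_ifs <;> norm_num

lemma indS_mono {M M' : Set ℤ} (h : M ⊆ M') (i : ℕ) : indS M i ≤ indS M' i := by
  unfold indS
  split_ifs with h1 h2
  · exact le_rfl
  · exact absurd (h h1) h2
  · norm_num
  · exact le_rfl

lemma logWeight_eq (A : Set ℤ) (n : ℕ) :
    logWeight A n = (Real.log n)⁻¹ * ∑ i ∈ Finset.range n, indS A i * ((i : ℝ) + 1)⁻¹ := by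
  unfold logWeight
  congr 1
  rw [Finset.range_eq_Ico, Finset.sum_Ico_add' (fun k : ℕ => indS A (k - 1) * (((k - 1 : ℕ) : ℝ) + 1)⁻¹) 0 n 1 |> fun h => (by simpa using h : ∑ i ∈ Finset.Ico 0 n, indS A i * ((i : ℝ) + 1)⁻¹ = _)]
  have : Finset.Icc 1 n = Finset.Ico 1 (n + 1) := by ext; simp
  rw [this]
  refine Finset.sum_congr rfl (fun k hk => ?_)
  obtain ⟨j, rfl⟩ : ∃ j, k = j + 1 := ⟨k - 1, by have := (Finset.mem_Ico.1 hk).1; omega⟩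
  simp [indS, Set.indicator]

lemma harm_eq (n : ℕ) : ∑ i ∈ Finset.range n, ((i : ℝ) + 1)⁻¹ = (harmonic n : ℝ) := by
  simp [harmonic]

lemma logWeight_nonneg (A : Set ℤ) (n : ℕ) : 0 ≤ logWeight A n := by
  rw [logWeight_eq]
  exact mul_nonneg (inv_nonneg.2 (Real.log_natCast_nonneg n))
    (Finset.sum_nonneg fun i _ => mul_nonneg (indS_nonneg A i) (by positivity))

lemma logWeight_le (A : Set ℤ) : ∀ᶠ n : ℕ in atTop, logWeight A n ≤ 2 := by
  have h1 : ∀ᶠ n : ℕ in atTop, 1 ≤ Real.log n :=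
    (Real.tendsto_log_atTop.comp tendsto_natCast_atTop_atTop).eventually_ge_atTop 1
  filter_upwards [h1] with n hn
  rw [logWeight_eq]
  have h2 : ∑ i ∈ Finset.range n, indS A i * ((i : ℝ) + 1)⁻¹ ≤ 1 + Real.log n := by
    refine le_trans (Finset.sum_le_sum (g := fun i : ℕ => ((i : ℝ) + 1)⁻¹) fun i _ => ?_) ?_
    · exact mul_le_of_le_one_left (by positivity) (indS_le_one A i)
    · rw [harm_eq]; exact harmonic_le_one_add_log n
  rw [inv_mul_le_iff₀ (by linarith)]
  linarith

/-- lower bound for the lower log density -/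
lemma le_logDensLow (A : Set ℤ) (d C : ℝ)
    (h : ∀ n, d * (harmonic n : ℝ) - C ≤ ∑ i ∈ Finset.range n, indS A i * ((i : ℝ) + 1)⁻¹)
    (hd : 0 ≤ d) : d ≤ logDensLow A := by
  have hlog : Tendsto (fun n : ℕ => Real.log n) atTop atTop :=
    Real.tendsto_log_atTop.comp tendsto_natCast_atTop_atTop
  have hlim : Tendsto (fun n : ℕ => d - C * (Real.log n)⁻¹) atTop (𝓝 d) := by
    simpa using (tendsto_const_nhds (x := d)).sub ((tendsto_inv_atTop_zero.comp hlog).const_mul C)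
  rw [← hlim.liminf_eq]
  refine liminf_le_liminf ?_ hlim.isBoundedUnder_ge
    (IsBoundedUnder.isCoboundedUnder_ge ⟨2, by simpa using logWeight_le A⟩)
  filter_upwards [hlog.eventually_ge_atTop 1, eventually_ge_atTop 1] with n hn hn1
  rw [logWeight_eq]
  have h1 := h n
  have h2 : Real.log n ≤ (harmonic n : ℝ) := by
    refine le_trans ?_ (log_add_one_le_harmonic n)
    exact Real.log_le_log (by positivity) (by push_cast; linarith)
  have h3 : d * Real.log n - C ≤ ∑ i ∈ Finset.range n, indS A i * ((i : ℝ) + 1)⁻¹ := by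
    nlinarith
  rw [← div_eq_inv_mul, le_div_iff₀ (by linarith)]
  have : (d - C * (Real.log n)⁻¹) * Real.log n = d * Real.log n - C := by
    field_simp
  linarith

/-- consequence of `c < logDensLow A` -/
lemma of_lt_logDensLow (A : Set ℤ) (c : ℝ) (hc : 0 ≤ c) (h : c < logDensLow A) :
    ∃ C : ℝ, ∀ n, -C ≤ ∑ i ∈ Finset.range n, (indS A i - c) * ((i : ℝ) + 1)⁻¹ := by
  have hev := eventually_lt_of_lt_liminf h 
    ⟨0, Filter.eventually_map.2 (Eventually.of_forall (logWeight_nonneg A))⟩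
  have hlog : Tendsto (fun n : ℕ => Real.log n) atTop atTop :=
    Real.tendsto_log_atTop.comp tendsto_natCast_atTop_atTop
  obtain ⟨n0, hn0⟩ := eventually_atTop.1 (hev.and (hlog.eventually_ge_atTop 1))
  set E : ℕ → ℝ := fun n => ∑ i ∈ Finset.range n, (indS A i - c) * ((i : ℝ) + 1)⁻¹ with hE
  refine ⟨c + ∑ j ∈ Finset.range n0, |E j|, fun n => ?_⟩
  have hs : 0 ≤ ∑ j ∈ Finset.range n0, |E j| := Finset.sum_nonneg fun _ _ => abs_nonneg _
  by_cases hn : n < n0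
  · have h1 : |E n| ≤ ∑ j ∈ Finset.range n0, |E j| :=
      Finset.single_le_sum (f := fun j => |E j|) (fun _ _ => abs_nonneg _) (Finset.mem_range.2 hn)
    have h2 := neg_abs_le (E n)
    change _ ≤ E n
    linarith
  · obtain ⟨h1, h2⟩ := hn0 n (not_lt.1 hn)
    rw [logWeight_eq, ← div_eq_inv_mul, lt_div_iff₀ (by linarith)] at h1
    have h3 := harmonic_le_one_add_log n
    rw [← harm_eq] at h3
    simp only [sub_mul, Finset.sum_sub_distrib, ← Finset.mul_sum]
    nlinarith

/-- Dirichlet series of the indicator. -/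
def zR (M : Set ℤ) (t : ℝ) : ℝ := ∑' i : ℕ, indS M i * ((i : ℝ) + 1) ^ (-t)

lemma summable_base {t : ℝ} (ht : 1 < t) : Summable fun i : ℕ => ((i : ℝ) + 1) ^ (-t) := by
  have := (summable_nat_add_iff 1).2 (Real.summable_nat_rpow.2 (show -t < -1 by linarith))
  simpa using this

lemma summable_zR (M : Set ℤ) {t : ℝ} (ht : 1 < t) :
    Summable fun i : ℕ => indS M i * ((i : ℝ) + 1) ^ (-t) :=
  Summable.of_nonneg_of_le (fun i => mul_nonneg (indS_nonneg M i) (by positivity))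
    (fun i => mul_le_of_le_one_left (by positivity) (indS_le_one M i)) (summable_base ht)

lemma zR_univ (t : ℝ) : zR univ t = ∑' i : ℕ, ((i : ℝ) + 1) ^ (-t) := by
  simp [zR, indS]

lemma zR_tendsto : Tendsto (fun t : ℝ => zR univ t) (𝓝[>] 1) atTop := by
  have h := tendsto_sub_mul_tsum_nat_rpow
  have h1 : Tendsto (fun s : ℝ => (s - 1)⁻¹) (𝓝[>] 1) atTop := by
    refine tendsto_inv_nhdsGT_zero.comp ?_
    refine tendsto_nhdsWithin_iff.2 ⟨?_, ?_⟩
    · have : Tendsto (fun s : ℝ => s - 1) (𝓝 1) (𝓝 (1 - 1)) := by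
        exact (continuous_id.sub continuous_const).tendsto _
      rw [sub_self] at this
      exact this.mono_left nhdsWithin_le_nhds
    · filter_upwards [self_mem_nhdsWithin] with s hs
      simpa using hs
  refine (h1.atTop_mul_pos one_pos h).congr' ?_
  filter_upwards [self_mem_nhdsWithin] with s hs
  have hs : 1 < s := hs
  have h0 : s - 1 ≠ 0 := by linarith
  rw [inv_mul_cancel_left₀ h0, zR_univ]
  have hsum : Summable fun n : ℕ => 1 / (n : ℝ) ^ s := Real.summable_one_div_nat_rpow.2 hs
  rw [hsum.tsum_eq_zero_add]
  have : (0 : ℝ) ^ s = 0 := Real.zero_rpow (by linarith)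
  simp only [Nat.cast_zero, this, div_zero, zero_add]
  refine tsum_congr fun i => ?_
  rw [Real.rpow_neg (by positivity)]
  simp

/-- Abelian bound: bounded below partial sums give bounded below Dirichlet sums. -/
lemma abel_tsum (M : Set ℤ) (c C ε t : ℝ) (σ : ℝ) (ht : 1 < t) (hε : 0 ≤ t - ε)
    (h : ∀ n, -C ≤ ∑ i ∈ Finset.range n, σ * (indS M i - c) * ((i : ℝ) + 1) ^ (-ε)) :
    -C ≤ σ * (zR M t - c * zR univ t) := by
  have hs : HasSum (fun i : ℕ => σ * (indS M i * ((i : ℝ) + 1) ^ (-t)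
      - c * ((i : ℝ) + 1) ^ (-t))) (σ * (zR M t - c * zR univ t)) := by
    rw [zR_univ]
    exact ((summable_zR M ht).hasSum.sub ((summable_base ht).hasSum.mul_left c)).mul_left σ
  refine ge_of_tendsto' hs.tendsto_sum_nat fun n => ?_
  have := abel_bound (fun i => σ * (indS M i - c) * ((i : ℝ) + 1) ^ (-ε))
    (fun i => ((i : ℝ) + 1) ^ (-(t - ε))) C h (fun n => by positivity) (fun n => by
      refine Real.rpow_le_rpow_of_nonpos (by positivity) (by push_cast; linarith) (by linarith)) n
  simp only [Nat.cast_zero, zero_add, Real.one_rpow, mul_one] at this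
  refine this.trans (le_of_eq (Finset.sum_congr rfl fun i _ => ?_))
  have : ((i : ℝ) + 1) ^ (-t) = ((i : ℝ) + 1) ^ (-ε) * ((i : ℝ) + 1) ^ (-(t - ε)) := by
    rw [← Real.rpow_add (by positivity)]; congr 1; ring
  rw [this]; ring

/-- `n ↦ n^{-u}` as an arithmetic function -/
def powAF (u : ℝ) : ArithmeticFunction ℝ := ⟨fun n => if n = 0 then 0 else (n : ℝ) ^ (-u), by simp⟩

/-- `n ↦ ∏_{p ∣ n} (1 - p^{-u})` -/
def gAF (u : ℝ) : ArithmeticFunction ℝ :=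
  ArithmeticFunction.prodPrimeFactors fun p => 1 - (p : ℝ) ^ (-u)

lemma powAF_apply (u : ℝ) {n : ℕ} (hn : n ≠ 0) : powAF u n = (n : ℝ) ^ (-u) := by
  simp [powAF, hn]

lemma gAF_nonneg (u : ℝ) (hu : 0 ≤ u) (n : ℕ) : 0 ≤ gAF u n := by
  by_cases hn : n = 0
  · simp [hn]
  · rw [gAF, ArithmeticFunction.prodPrimeFactors_apply hn]
    refine Finset.prod_nonneg fun p hp => ?_
    have hp1 : (1 : ℝ) ≤ p := by exact_mod_cast (Nat.prime_of_mem_primeFactors hp).one_lt.le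
    have := Real.rpow_le_one_of_one_le_of_nonpos hp1 (show -u ≤ 0 by linarith)
    linarith

lemma powAF_mult (u : ℝ) : (powAF u).IsMultiplicative := by
  rw [ArithmeticFunction.IsMultiplicative.iff_ne_zero]
  refine ⟨by simp [powAF], fun {m n} hm hn _ => ?_⟩
  rw [powAF_apply u hm, powAF_apply u hn, powAF_apply u (mul_ne_zero hm hn), Nat.cast_mul,
    Real.mul_rpow (by positivity) (by positivity)]

lemma pow_mul_g (u : ℝ) : powAF u * gAF u = (ArithmeticFunction.zeta : ArithmeticFunction ℝ) := by
  have hg : (gAF u).IsMultiplicative := ArithmeticFunction.IsMultiplicative.prodPrimeFactors _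
  rw [ArithmeticFunction.IsMultiplicative.eq_iff_eq_on_prime_powers _
    ((powAF_mult u).mul hg) _ ArithmeticFunction.isMultiplicative_zeta.natCast]
  intro p k hp
  have hz : (ArithmeticFunction.zeta : ArithmeticFunction ℝ) (p ^ k) = 1 := by
    simp [ArithmeticFunction.natCoe_apply, ArithmeticFunction.zeta_apply, hp.ne_zero]
  rw [hz, ArithmeticFunction.mul_apply, Nat.sum_divisorsAntidiagonal (powAF u · * gAF u ·),
    Nat.sum_divisors_prime_pow hp, Finset.sum_range_succ]
  set q : ℝ := (p : ℝ) ^ (-u) with hq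
  have hpow : ∀ i, powAF u (p ^ i) = q ^ i := by
    intro i
    rw [powAF_apply u (pow_ne_zero _ hp.ne_zero), Nat.cast_pow, hq, ← Real.rpow_natCast,
      ← Real.rpow_natCast, ← Real.rpow_mul (by positivity), ← Real.rpow_mul (by positivity),
      mul_comm]
  have h1 : ∀ i ∈ Finset.range k, powAF u (p ^ i) * gAF u (p ^ k / p ^ i) = q ^ i * (1 - q) := by
    intro i hi
    have hi := Finset.mem_range.1 hi
    rw [hpow, Nat.pow_div hi.le hp.pos, gAF, ArithmeticFunction.prodPrimeFactors_apply
      (pow_ne_zero _ hp.ne_zero), Nat.primeFactors_prime_pow (by omega) hp, Finset.prod_singleton]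
  rw [Finset.sum_congr rfl h1, ← Finset.sum_mul, geom_sum_mul_neg, hpow,
    Nat.div_self (pow_pos hp.pos k), gAF,
    ArithmeticFunction.prodPrimeFactors_apply one_ne_zero]
  simp

lemma rpow_conv (s t : ℝ) (n : ℕ) (hn : n ≠ 0) :
    ∑ x ∈ n.divisorsAntidiagonal, (x.1 : ℝ) ^ (-s) * (gAF (s - t) x.2 * (x.2 : ℝ) ^ (-t))
      = (n : ℝ) ^ (-t) := by
  have h : (powAF (s - t) * gAF (s - t)) n = 1 := by
    rw [pow_mul_g]
    simp [ArithmeticFunction.natCoe_apply, ArithmeticFunction.zeta_apply, hn]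
  rw [ArithmeticFunction.mul_apply] at h
  rw [← one_mul ((n : ℝ) ^ (-t)), ← h, Finset.sum_mul]
  refine Finset.sum_congr rfl fun x hx => ?_
  obtain ⟨hx1, -⟩ := Nat.mem_divisorsAntidiagonal.1 hx
  have ha : x.1 ≠ 0 := by rintro h0; apply hn; rw [← hx1, h0, zero_mul]
  rw [powAF_apply _ ha, ← hx1, Nat.cast_mul, Real.mul_rpow (by positivity) (by positivity)]
  have ha' : (0 : ℝ) < x.1 := by exact_mod_cast Nat.pos_of_ne_zero ha
  have : (x.1 : ℝ) ^ (-s) = (x.1 : ℝ) ^ (-(s - t)) * (x.1 : ℝ) ^ (-t) := by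
    rw [← Real.rpow_add ha']; congr 1; ring
  rw [this]; ring

/-- ENNReal version of the Dirichlet series. -/
def zE (M : Set ℤ) (t : ℝ) : ENNReal :=
  ∑' n : ℕ+, if ((n : ℕ) : ℤ) ∈ M then ENNReal.ofReal (((n : ℕ) : ℝ) ^ (-t)) else 0

lemma zE_eq (M : Set ℤ) {t : ℝ} (ht : 1 < t) : zE M t = ENNReal.ofReal (zR M t) := by
  unfold zE zR
  rw [ENNReal.ofReal_tsum_of_nonneg
    (fun i => mul_nonneg (indS_nonneg M i) (by positivity)) (summable_zR M ht),
    tsum_pnat_eq_tsum_succ (f := fun n : ℕ => if ((n : ℕ) : ℤ) ∈ M then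
      ENNReal.ofReal ((n : ℝ) ^ (-t)) else 0)]
  refine tsum_congr fun i => ?_
  unfold indS
  split_ifs <;> simp

lemma zE_expand (M : Set ℤ) (s t : ℝ) (hst : t ≤ s) :
    zE M t = ∑' x : ℕ+ × ℕ+, if (((x.1 : ℕ) * (x.2 : ℕ) : ℕ) : ℤ) ∈ M then
      ENNReal.ofReal (((x.1 : ℕ) : ℝ) ^ (-s)) *
        ENNReal.ofReal (gAF (s - t) x.2 * ((x.2 : ℕ) : ℝ) ^ (-t)) else 0 := by
  rw [← sigmaAntidiagonalEquivProd.tsum_eq, ENNReal.tsum_sigma']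
  unfold zE
  refine tsum_congr fun n => ?_
  have hval : ∀ x : Nat.divisorsAntidiagonal n,
      (((sigmaAntidiagonalEquivProd ⟨n, x⟩).1 : ℕ) = x.1.1) ∧
      (((sigmaAntidiagonalEquivProd ⟨n, x⟩).2 : ℕ) = x.1.2) := fun x => ⟨rfl, rfl⟩
  simp only [hval]
  rw [Finset.tsum_subtype (n : ℕ).divisorsAntidiagonal (fun x : ℕ × ℕ =>
    if ((x.1 * x.2 : ℕ) : ℤ) ∈ M then ENNReal.ofReal ((x.1 : ℝ) ^ (-s)) *
        ENNReal.ofReal (gAF (s - t) x.2 * (x.2 : ℝ) ^ (-t)) else 0)]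
  have : ∀ x ∈ (n : ℕ).divisorsAntidiagonal,
      (if ((x.1 * x.2 : ℕ) : ℤ) ∈ M then ENNReal.ofReal ((x.1 : ℝ) ^ (-s)) *
        ENNReal.ofReal (gAF (s - t) x.2 * (x.2 : ℝ) ^ (-t)) else 0)
      = if ((n : ℕ) : ℤ) ∈ M then ENNReal.ofReal ((x.1 : ℝ) ^ (-s) *
        (gAF (s - t) x.2 * (x.2 : ℝ) ^ (-t))) else 0 := by
    intro x hx
    rw [(Nat.mem_divisorsAntidiagonal.1 hx).1, ENNReal.ofReal_mul (p := (x.1 : ℝ) ^ (-s)) (by positivity)]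
  rw [Finset.sum_congr rfl this]
  split_ifs
  · rw [← ENNReal.ofReal_sum_of_nonneg, rpow_conv s t n n.ne_zero]
    intro x _
    have := gAF_nonneg (s - t) (by linarith) x.2
    positivity
  · simp

lemma zE_mono (M : Set ℤ) (hM : ∀ a ∈ M, ∀ k : ℤ, a * k ∈ M) (s t : ℝ) (hst : t ≤ s) :
    zE M s * zE univ t ≤ zE M t * zE univ s := by
  set Q : ENNReal := ∑' b : ℕ+, ENNReal.ofReal (gAF (s - t) b * ((b : ℕ) : ℝ) ^ (-t)) with hQ
  have h1 : zE univ t = zE univ s * Q := by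
    rw [zE_expand univ s t hst, ENNReal.tsum_prod']
    simp only [Set.mem_univ, if_true, ENNReal.tsum_mul_left, ENNReal.tsum_mul_right, zE, ← hQ]
  have h2 : zE M s * Q ≤ zE M t := by
    rw [zE_expand M s t hst, ENNReal.tsum_prod']
    unfold zE
    rw [← ENNReal.tsum_mul_right]
    refine ENNReal.tsum_le_tsum fun a => ?_
    rw [hQ, ← ENNReal.tsum_mul_left]
    refine ENNReal.tsum_le_tsum fun b => ?_
    by_cases ha : ((a : ℕ) : ℤ) ∈ M
    · have : (((a : ℕ) * (b : ℕ) : ℕ) : ℤ) ∈ M := by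
        rw [Nat.cast_mul]; exact hM _ ha _
      rw [if_pos ha, if_pos this]
    · simp [ha]
  calc zE M s * zE univ t = (zE M s * Q) * zE univ s := by rw [h1]; ring
    _ ≤ _ := by gcongr

lemma zR_nonneg (M : Set ℤ) (t : ℝ) : 0 ≤ zR M t :=
  tsum_nonneg fun i => mul_nonneg (indS_nonneg M i) (by positivity)

lemma zR_mono (M : Set ℤ) (hM : ∀ a ∈ M, ∀ k : ℤ, a * k ∈ M) (s t : ℝ) (ht : 1 < t)
    (hst : t ≤ s) : zR M s * zR univ t ≤ zR M t * zR univ s := by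
  have h := zE_mono M hM s t hst
  rw [zE_eq _ ht, zE_eq _ ht, zE_eq _ (by linarith), zE_eq _ (by linarith),
    ← ENNReal.ofReal_mul (zR_nonneg _ _), ← ENNReal.ofReal_mul (zR_nonneg _ _)] at h
  exact (ENNReal.ofReal_le_ofReal_iff (mul_nonneg (zR_nonneg _ _) (zR_nonneg _ _))).1 h

instance instHaar (B : Set ℕ) [∀ b : B, NeZero (b : ℕ)] : (mH B).IsAddHaarMeasure := by
  unfold mH; infer_instance

instance instProb (B : Set ℕ) [∀ b : B, NeZero (b : ℕ)] : IsProbabilityMeasure (mH B) := by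
  constructor
  have := Measure.addHaarMeasure_self (K₀ := (⊤ : TopologicalSpace.PositiveCompacts (Hgrp B)))
  simpa [mH] using this

/-- truncated zero set -/
def TN (B B' : Set ℕ) (N : ℕ) : Set (Hgrp B) :=
  {h | ∃ b : B, (b : ℕ) ∈ B' ∧ (b : ℕ) ≤ N ∧ (h : (b : B) → ZMod b) b = 0}

lemma isOpen_TN (B B' : Set ℕ) (N : ℕ) : IsOpen (TN B B' N) := by
  have : TN B B' N = ⋃ b : B, ⋃ (_ : (b : ℕ) ∈ B' ∧ (b : ℕ) ≤ N),
      {h : Hgrp B | (h : (b : B) → ZMod b) b = 0} := by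
    ext h; simp [TN, and_assoc]
  rw [this]
  refine isOpen_iUnion fun b => isOpen_iUnion fun _ => ?_
  have hc : Continuous fun h : Hgrp B => (h : (b : B) → ZMod b) b :=
    (continuous_apply b).comp continuous_subtype_val
  exact (isOpen_discrete ({0} : Set (ZMod b))).preimage hc

lemma approx (B : Set ℕ) [∀ b : B, NeZero (b : ℕ)] (N : ℕ) (h : Hgrp B) :
    ∃ m : ℕ, ∀ b : B, (b : ℕ) ≤ N → (h : (b : B) → ZMod b) b = (m : ZMod b) := by
  have hfin : {b : B | (b : ℕ) ≤ N}.Finite :=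
    Set.Finite.preimage Subtype.val_injective.injOn (Set.finite_Iic N)
  have ho : IsOpen (⋂ b ∈ {b : B | (b : ℕ) ≤ N},
      {x : (b : B) → ZMod b | x b = (h : (b : B) → ZMod b) b}) :=
    hfin.isOpen_biInter fun b _ => by
      have hc : Continuous fun x : (b : B) → ZMod b => x b := continuous_apply b
      exact (isOpen_discrete ({(h : (b : B) → ZMod b) b} : Set (ZMod b))).preimage hc
  have hh : (h : (b : B) → ZMod b) ∈ closure ((diagEmb B).range : Set ((b : B) → ZMod b)) := by
    have := h.2
    unfold Hgrp at this
    rwa [← SetLike.mem_coe, AddSubgroup.topologicalClosure_coe] at this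
  obtain ⟨x, hx1, ⟨n, rfl⟩⟩ := mem_closure_iff.1 hh _ ho (by simp)
  have hL : ((N.factorial : ℕ) : ℤ) ≠ 0 := by exact_mod_cast N.factorial_ne_zero
  refine ⟨(n % (N.factorial : ℤ)).toNat, fun b hb => ?_⟩
  have h1 : (n : ZMod b) = (h : (b : B) → ZMod b) b := by
    simpa [diagEmb] using Set.mem_iInter₂.1 hx1 b hb
  rw [← h1]
  have h2 : (((n % (N.factorial : ℤ)).toNat : ℤ) : ZMod b) = (n : ZMod b) := by
    rw [Int.toNat_of_nonneg (Int.emod_nonneg _ hL), ZMod.intCast_eq_intCast_iff_dvd_sub]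
    refine dvd_trans ?_ Int.dvd_self_sub_emod
    exact_mod_cast Nat.dvd_factorial (Nat.pos_of_ne_zero (NeZero.ne (b : ℕ))) hb
  rw [← h2, Int.cast_natCast]

/-- truncation of a set of naturals -/
def trunc (B' : Set ℕ) (N : ℕ) : Set ℕ := {b ∈ B' | b ≤ N}

lemma indS_periodic (B : Set ℕ) [∀ b : B, NeZero (b : ℕ)] (B' : Set ℕ) (hB : B' ⊆ B) (N n : ℕ) :
    indS (multiplesZ (trunc B' N)) (n + N.factorial) = indS (multiplesZ (trunc B' N)) n := by
  unfold indS
  have : (((n + N.factorial + 1 : ℕ) : ℤ) ∈ multiplesZ (trunc B' N)) ↔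
      (((n + 1 : ℕ) : ℤ) ∈ multiplesZ (trunc B' N)) := by
    refine exists_congr fun b => and_congr_right fun hb => ?_
    have hb0 : b ≠ 0 := by
      have : NeZero b := inferInstanceAs (NeZero ((⟨b, hB hb.1⟩ : B) : ℕ))
      exact NeZero.ne b
    have hd : (b : ℤ) ∣ (N.factorial : ℤ) := by
      exact_mod_cast Nat.dvd_factorial (Nat.pos_of_ne_zero hb0) hb.2
    rw [show ((n + N.factorial + 1 : ℕ) : ℤ) = ((n + 1 : ℕ) : ℤ) + (N.factorial : ℤ) by
      push_cast; ring]
    exact dvd_add_left hd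
  simp only [this]

lemma count_TN (B : Set ℕ) [∀ b : B, NeZero (b : ℕ)] (B' : Set ℕ) (hB : B' ⊆ B) (N : ℕ) :
    (N.factorial : ℝ) * (mH B (TN B B' N)).toReal
      = ∑ r ∈ Finset.range N.factorial, indS (multiplesZ (trunc B' N)) r := by
  set L := N.factorial with hL
  set M := multiplesZ (trunc B' N) with hM
  let D : ℤ → Hgrp B := fun n => ⟨diagEmb B n, (diagEmb B).range.le_topologicalClosure ⟨n, rfl⟩⟩
  have hmeas : MeasurableSet (TN B B' N) := (isOpen_TN B B' N).measurableSet
  have hf : Measurable ((TN B B' N).indicator (fun _ => (1 : ENNReal))) :=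
    measurable_const.indicator hmeas
  have hpt : ∀ h : Hgrp B, ∑ r ∈ Finset.range L,
      (TN B B' N).indicator (fun _ => (1 : ENNReal)) (D ((r + 1 : ℕ) : ℤ) + h)
      = ENNReal.ofReal (∑ r ∈ Finset.range L, indS M r) := by
    intro h
    obtain ⟨m, hm⟩ := approx B N h
    have hshift := periodic_shift (indS M) L (indS_periodic B B' hB N) m
    rw [Finset.sum_range_add, add_right_inj] at hshift
    rw [← hshift, ENNReal.ofReal_sum_of_nonneg (fun i _ => indS_nonneg M _)]
    refine Finset.sum_congr rfl fun r _ => ?_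
    have hiff : D ((r + 1 : ℕ) : ℤ) + h ∈ TN B B' N ↔ ((m + r + 1 : ℕ) : ℤ) ∈ M := by
      have hval : ∀ b : B, (b : ℕ) ≤ N →
          ((D ((r + 1 : ℕ) : ℤ) + h : Hgrp B) : (b : B) → ZMod b) b
            = ((m + r + 1 : ℕ) : ZMod b) := by
        intro b hb
        have : ((D ((r + 1 : ℕ) : ℤ) + h : Hgrp B) : (b : B) → ZMod b) b
          = (((r + 1 : ℕ) : ℤ) : ZMod b) + (h : (b : B) → ZMod b) b := rfl
        rw [this, hm b hb]
        push_cast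
        ring
      constructor
      · rintro ⟨b, hb1, hb2, hb3⟩
        rw [hval b hb2, ZMod.natCast_eq_zero_iff] at hb3
        exact ⟨b, ⟨hb1, hb2⟩, by exact_mod_cast hb3⟩
      · rintro ⟨b, ⟨hb1, hb2⟩, hb3⟩
        refine ⟨⟨b, hB hb1⟩, hb1, hb2, ?_⟩
        rw [hval ⟨b, hB hb1⟩ hb2, ZMod.natCast_eq_zero_iff]
        exact_mod_cast hb3
    unfold indS
    by_cases hh : ((m + r + 1 : ℕ) : ℤ) ∈ M
    · rw [Set.indicator_of_mem (hiff.2 hh), if_pos hh]; simp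
    · rw [Set.indicator_of_notMem (fun h' => hh (hiff.1 h')), if_neg hh]; simp
  have hint : ∫⁻ h, ∑ r ∈ Finset.range L,
      (TN B B' N).indicator (fun _ => (1 : ENNReal)) (D ((r + 1 : ℕ) : ℤ) + h) ∂(mH B)
      = L * mH B (TN B B' N) := by
    rw [lintegral_finsetSum]
    · have : ∀ r ∈ Finset.range L, ∫⁻ h, (TN B B' N).indicator (fun _ => (1 : ENNReal))
          (D ((r + 1 : ℕ) : ℤ) + h) ∂(mH B) = mH B (TN B B' N) := by
        intro r _
        rw [lintegral_add_left_eq_self (μ := mH B)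
          (fun h => (TN B B' N).indicator (fun _ => (1 : ENNReal)) h), lintegral_indicator hmeas]
        simp
      rw [Finset.sum_congr rfl this]
      simp
    · intro r _
      exact hf.comp (measurable_const_add _)
  simp only [hpt] at hint
  rw [lintegral_const, measure_univ, mul_one] at hint
  have := congrArg ENNReal.toReal hint
  rw [ENNReal.toReal_ofReal (Finset.sum_nonneg fun i _ => indS_nonneg M _), ENNReal.toReal_mul] at this
  rw [this]; simp

lemma mult_closed (B : Set ℕ) : ∀ a ∈ multiplesZ B, ∀ k : ℤ, a * k ∈ multiplesZ B := by
  rintro a ⟨b, hb, h⟩ k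
  exact ⟨b, hb, h.mul_right k⟩

lemma partial_bdd
    (B : Set ℕ) [∀ b : B, NeZero (b : ℕ)] (B' : Set ℕ) (hB : B' ⊆ B) (N : ℕ) : ∃ C : ℝ, 0 ≤ C ∧ ∀ n, |∑ i ∈ Finset.range n,
    (indS (multiplesZ (trunc B' N)) i - (mH B (TN B B' N)).toReal)| ≤ C := by
  refine periodic_bounded _ N.factorial N.factorial_pos (fun n => ?_) ?_
  · simp only [indS_periodic B B' hB]
  · rw [Finset.sum_sub_distrib, ← count_TN B B' hB N]; simp

lemma finite_lower
    (B : Set ℕ) [∀ b : B, NeZero (b : ℕ)] (B' : Set ℕ) (hB : B' ⊆ B) (N : ℕ) : (mH B (TN B B' N)).toReal ≤ logDensLow (multiplesZ B') := by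
  obtain ⟨C, hC0, hC⟩ := partial_bdd B B' hB N
  refine le_logDensLow _ _ C (fun n => ?_) ENNReal.toReal_nonneg
  have h1 := abel_bound (fun i => indS (multiplesZ (trunc B' N)) i - (mH B (TN B B' N)).toReal)
    (fun i => ((i : ℝ) + 1)⁻¹) C (fun n => (abs_le.1 (hC n)).1) (fun n => by positivity)
    (fun n => by
      refine inv_anti₀ (by positivity) (by push_cast; linarith)) n
  simp only [sub_mul, Finset.sum_sub_distrib, ← Finset.mul_sum, harm_eq] at h1
  have h2 : ∑ i ∈ Finset.range n, indS (multiplesZ (trunc B' N)) i * ((i : ℝ) + 1)⁻¹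
      ≤ ∑ i ∈ Finset.range n, indS (multiplesZ B') i * ((i : ℝ) + 1)⁻¹ := by
    refine Finset.sum_le_sum fun i _ => mul_le_mul_of_nonneg_right (indS_mono ?_ i) (by positivity)
    rintro a ⟨b, hb, h⟩
    exact ⟨b, hb.1, h⟩
  simp at h1
  linarith

lemma finite_upper
    (B : Set ℕ) [∀ b : B, NeZero (b : ℕ)] (B' : Set ℕ) (hB : B' ⊆ B) (N : ℕ) {s : ℝ} (hs : 1 < s) :
    zR (multiplesZ (trunc B' N)) s ≤ (mH B (TN B B' N)).toReal * zR univ s := by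
  obtain ⟨C, hC0, hC⟩ := partial_bdd B B' hB N
  set M := multiplesZ (trunc B' N)
  set d := (mH B (TN B B' N)).toReal
  have key : ∀ t, 1 < t → zR M t ≤ d * zR univ t + C := by
    intro t ht
    have := abel_tsum M d C 0 t (-1) ht (by linarith) (fun n => by
      have h1 := (abs_le.1 (hC n)).2
      simp only [neg_zero, Real.rpow_zero, mul_one, ← Finset.mul_sum]
      linarith)
    linarith
  have hlim : Tendsto (fun t => (d + C * (zR univ t)⁻¹) * zR univ s) (𝓝[>] 1)
      (𝓝 (d * zR univ s)) := by
    have := (tendsto_const_nhds (x := d)).add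
      ((tendsto_inv_atTop_zero.comp zR_tendsto).const_mul C)
    simpa using this.mul_const (zR univ s)
  refine ge_of_tendsto hlim ?_
  filter_upwards [self_mem_nhdsWithin, Ioo_mem_nhdsGT hs, zR_tendsto.eventually_gt_atTop 0]
    with t ht hts hpos
  have h1 := zR_mono M (mult_closed _) s t ht hts.2.le
  have h2 := mul_le_mul_of_nonneg_right (key t ht) (zR_nonneg univ s)
  have h3 : zR M s ≤ (d * zR univ t + C) * zR univ s / zR univ t := by
    rw [le_div_iff₀ hpos]; linarith
  refine h3.trans (le_of_eq ?_)
  field_simp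

lemma upper_all
    (B : Set ℕ) [∀ b : B, NeZero (b : ℕ)] (B' : Set ℕ) (hB : B' ⊆ B) {s d : ℝ} (hs : 1 < s) (hd : ∀ N, (mH B (TN B B' N)).toReal ≤ d) :
    zR (multiplesZ B') s ≤ d * zR univ s := by
  have hpos := zR_nonneg univ s
  refine (summable_zR _ hs).tsum_le_of_sum_le fun F => ?_
  have hex : ∃ N, ∀ i ∈ F, indS (multiplesZ B') i = indS (multiplesZ (trunc B' N)) i := by
    refine ⟨F.sup id + 1, fun i hi => ?_⟩
    unfold indS
    have hiff : ((i + 1 : ℕ) : ℤ) ∈ multiplesZ B' ↔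
        ((i + 1 : ℕ) : ℤ) ∈ multiplesZ (trunc B' (F.sup id + 1)) := by
      constructor
      · rintro ⟨b, hb, h⟩
        refine ⟨b, ⟨hb, ?_⟩, h⟩
        have h1 : b ∣ i + 1 := by exact_mod_cast h
        have h2 := Nat.le_of_dvd (by omega) h1
        have h3 : i ≤ F.sup id := Finset.le_sup (f := id) hi
        omega
      · rintro ⟨b, hb, h⟩
        exact ⟨b, hb.1, h⟩
    simp only [hiff]
  obtain ⟨N, hN⟩ := hex
  calc ∑ i ∈ F, indS (multiplesZ B') i * ((i : ℝ) + 1) ^ (-s)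
      = ∑ i ∈ F, indS (multiplesZ (trunc B' N)) i * ((i : ℝ) + 1) ^ (-s) :=
        Finset.sum_congr rfl fun i hi => by rw [hN i hi]
    _ ≤ zR (multiplesZ (trunc B' N)) s :=
        (summable_zR _ hs).sum_le_tsum _ fun i _ => mul_nonneg (indS_nonneg _ i) (by positivity)
    _ ≤ (mH B (TN B B' N)).toReal * zR univ s := finite_upper B B' hB N hs
    _ ≤ _ := mul_le_mul_of_nonneg_right (hd N) hpos

lemma logDensLow_le
    (B : Set ℕ) [∀ b : B, NeZero (b : ℕ)] (B' : Set ℕ) (hB : B' ⊆ B) {d : ℝ} (hd0 : 0 ≤ d) (hd : ∀ N, (mH B (TN B B' N)).toReal ≤ d) :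
    logDensLow (multiplesZ B') ≤ d := by
  refine le_of_forall_lt_imp_le_of_dense fun c hc => ?_
  by_cases hc0 : c < 0
  · linarith
  obtain ⟨C, hC⟩ := of_lt_logDensLow _ c (not_lt.1 hc0) hc
  have key : ∀ t, 1 < t → c * zR univ t - C ≤ d * zR univ t := by
    intro t ht
    have := abel_tsum (multiplesZ B') c C 1 t 1 ht (by linarith) (fun n => by
      simpa [Real.rpow_neg_one] using hC n)
    have := upper_all B B' hB ht hd
    linarith
  have hlim : Tendsto (fun t => d + C * (zR univ t)⁻¹) (𝓝[>] 1) (𝓝 d) := by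
    simpa using (tendsto_const_nhds (x := d)).add
      ((tendsto_inv_atTop_zero.comp zR_tendsto).const_mul C)
  refine ge_of_tendsto hlim ?_
  filter_upwards [self_mem_nhdsWithin, zR_tendsto.eventually_gt_atTop 0] with t ht hpos
  have h1 := key t ht
  have h2 : d + C * (zR univ t)⁻¹ = (d * zR univ t + C) / zR univ t := by field_simp
  rw [h2, le_div_iff₀ hpos]
  linarith

lemma logDensLow_eq
    (B : Set ℕ) [∀ b : B, NeZero (b : ℕ)] (B' : Set ℕ) (hB : B' ⊆ B) : logDensLow (multiplesZ B') = 1 - (mH B (Wset B B')).toReal := by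
  have hU : (⋃ N, TN B B' N) = (Wset B B')ᶜ := by
    ext h
    simp only [TN, Wset, Set.mem_iUnion, Set.mem_ofPred_eq, Set.mem_compl_iff, not_forall, not_not]
    constructor
    · rintro ⟨N, b, h1, -, h2⟩
      exact ⟨b, h1, h2⟩
    · rintro ⟨b, h1, h2⟩
      exact ⟨b, b, h1, le_rfl, h2⟩
  have hopen : IsOpen (Wset B B')ᶜ := hU ▸ isOpen_iUnion fun N => isOpen_TN B B' N
  have hmeas : MeasurableSet (Wset B B') := by
    simpa using hopen.measurableSet.compl
  have hmono : Monotone (TN B B') := by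
    rintro N N' hN h ⟨b, h1, h2, h3⟩
    exact ⟨b, h1, h2.trans hN, h3⟩
  have hval : 1 - (mH B (Wset B B')).toReal = (mH B (⋃ N, TN B B' N)).toReal := by
    rw [hU]
    exact (probReal_compl_eq_one_sub (μ := mH B) hmeas).symm
  rw [hval]
  have hlim : Tendsto (fun N => (mH B (TN B B' N)).toReal) atTop
      (𝓝 (mH B (⋃ N, TN B B' N)).toReal) :=
    (ENNReal.tendsto_toReal (measure_ne_top _ _)).comp (tendsto_measure_iUnion_atTop hmono)
  refine le_antisymm ?_ (le_of_tendsto' hlim fun N => finite_lower B B' hB N)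
  refine logDensLow_le B B' hB ENNReal.toReal_nonneg fun N => ?_
  exact ENNReal.toReal_mono (measure_ne_top _ _) (measure_mono (Set.subset_iUnion _ N))


/-- `lim_{N→∞} δ(M_{B̃^(N)}) = 1 − m_H(W_∞)`. -/
theorem tendsto_logDensity_btilde (B : Set ℕ) [∀ b : B, NeZero (b : ℕ)] (hprim : Primitive B) :
    Tendsto (fun N : ℕ => logDensLow (multiplesZ (Btilde B N))) atTop
      (𝓝 (1 - (mH B (⋃ N : ℕ, Wset B (Btilde B N))).toReal)) := by
  have hsub : ∀ N, Btilde B N ⊆ B := fun N b hb => hb.1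
  simp only [fun N => logDensLow_eq B (Btilde B N) (hsub N)]
  have hmono : Monotone fun N => Wset B (Btilde B N) := by
    intro N N' hN h hh b hb
    exact hh b ⟨hb.1, fun p hp hpb => lt_of_le_of_lt hN (hb.2 p hp hpb)⟩
  exact tendsto_const_nhds.sub
    ((ENNReal.tendsto_toReal (measure_ne_top _ _)).comp (tendsto_measure_iUnion_atTop hmono))
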